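/- Let G be a quasi-banana graph with first gonality gon_1(G) = k and genus g = C(k,2). Then for every integer r ≥ 1: if r < g then gon_r(G) = l(k+1) - h, where 1 ≤ l ≤ k-2 and 0 ≤ h ≤ l are the uniquely determined integers such that r = l(l+3)/2 - h; and if r ≥ g then gon_r(G) = g + r. -/

import Mathlib

open Finset

variable {V : Type*} [Fintype V] [DecidableEq V]

/-- A finite loopless multigraph on vertex type `V`, given by symmetric edge multiplicities. -/
structure Multigraph (V : Type*) [Fintype V] [DecidableEq V] where
  mult : V → V → ℕ
  symm : ∀ u v, mult u v = mult v u
  loopless : ∀ v, mult v v = 0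

namespace Multigraph

def Adj (G : Multigraph V) (u v : V) : Prop := 0 < G.mult u v

/-- A graph is connected. -/
def Connected (G : Multigraph V) : Prop :=
  Nonempty V ∧ ∀ u v : V, Relation.ReflTransGen G.Adj u v

/-- Valence of a vertex. -/
def valence (G : Multigraph V) (v : V) : ℕ := ∑ u, G.mult v u

/-- The Laplacian applied to an integer-valued function on the vertices. -/
def laplacian (G : Multigraph V) (f : V → ℤ) : V → ℤ :=
  fun w => ∑ u, (G.mult w u : ℤ) * (f w - f u)

/-- Degree of a divisor. -/
def degree (D : V → ℤ) : ℤ := ∑ v, D v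

/-- A divisor is effective if all coefficients are nonnegative. -/
def Effective (D : V → ℤ) : Prop := ∀ v, 0 ≤ D v

/-- Linear equivalence of divisors: they differ by a sequence of chip-firing moves,
equivalently by a Laplacian of an integer function. -/
def LinEquiv (G : Multigraph V) (D D' : V → ℤ) : Prop :=
  ∃ f : V → ℤ, D' = D - G.laplacian f

/-- A divisor is winnable if it is linearly equivalent to an effective divisor. -/
def Winnable (G : Multigraph V) (D : V → ℤ) : Prop :=
  ∃ E : V → ℤ, Effective E ∧ G.LinEquiv D E

/-- The Baker–Norine rank of a divisor: the largest `r` such that `D - E` is winnable for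
every effective divisor `E` of degree `r` (the defining set contains all negative integers,
and its supremum is `-1` precisely when `D` itself is not winnable). -/
noncomputable def rank (G : Multigraph V) (D : V → ℤ) : ℤ :=
  sSup {r : ℤ | ∀ E : V → ℤ, Effective E → degree E = r → G.Winnable (fun w => D w - E w)}

/-- The `k`-th gonality of a graph: the smallest degree of a divisor of rank `k`. -/
noncomputable def gonality (G : Multigraph V) (k : ℤ) : ℤ :=
  sInf {d : ℤ | ∃ D : V → ℤ, G.rank D = k ∧ degree D = d}

/-- A graph is gonality-tight if its second gonality exceeds its first by exactly 1. -/
def GonalityTight (G : Multigraph V) : Prop :=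
  G.gonality 2 = G.gonality 1 + 1

/-- A divisor realises the `k`-th gonality if it has rank `k` and degree `gon_k(G)`. -/
def Realises (G : Multigraph V) (k : ℤ) (D : V → ℤ) : Prop :=
  G.rank D = k ∧ degree D = G.gonality k

/-- A divisor is `v`-reduced: nonnegative away from `v`, and set-firing any nonempty set of
vertices not containing `v` creates a negative coefficient inside the set. -/
def Reduced (G : Multigraph V) (v : V) (D : V → ℤ) : Prop :=
  (∀ w, w ≠ v → 0 ≤ D w) ∧
    ∀ U : Finset V, U.Nonempty → v ∉ U →
      ∃ w ∈ U, D w - ∑ u ∈ Uᶜ, (G.mult w u : ℤ) < 0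

/-- The genus (first Betti number) of a graph: `|E| - |V| + 1`. -/
def genus (G : Multigraph V) : ℤ :=
  ((∑ u, ∑ v, G.mult u v : ℕ) : ℤ) / 2 - Fintype.card V + 1

/-- The canonical divisor of a graph. -/
def canonical (G : Multigraph V) : V → ℤ :=
  fun w => (G.valence w : ℤ) - 2

/-- The subgraph induced on a set `S` of vertices (with all edges among `S`). -/
def induce (G : Multigraph V) (S : Finset V) : Multigraph {x // x ∈ S} where
  mult a b := G.mult a b
  symm a b := G.symm a b
  loopless a := G.loopless a

/-- `G.SeparatedBy u w v` means every path from `w` to `v` passes through `u`. -/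
def SeparatedBy (G : Multigraph V) (u w v : V) : Prop :=
  ¬ Relation.ReflTransGen (fun x y => G.Adj x y ∧ x ≠ u ∧ y ≠ u) w v

end Multigraph

/-- Size of the `i`-th level of a quasi-banana graph: level `0` has a single vertex. -/
def qbSize (q : ℕ → ℕ) (i : ℕ) : ℕ := if i = 0 then 1 else q i

/-- `ℓ` is a quasi-banana labelling of `G` exhibiting `G ≅ QB_m(q_1, …, q_m)`:
`ℓ` is a bijection onto the pairs `(i, j)` with `i ≤ m`, `1 ≤ j ≤ qbSize q i`
(vertex `u_{i,j}` is the vertex labelled `(i,j)`), and the edge multiplicities are: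
one edge between distinct vertices of the same level, `(∑_{k=1}^{i} q_k) + 2` edges
between `u_{i,1}` and each `u_{i+1,j}`, and no other edges. -/
def Multigraph.IsQBLabelling (G : Multigraph V) (m : ℕ) (q : ℕ → ℕ) (ℓ : V → ℕ × ℕ) : Prop :=
  (∀ i, 1 ≤ i → i ≤ m → 0 < q i) ∧
  Function.Injective ℓ ∧
  (∀ v : V, (ℓ v).1 ≤ m ∧ 1 ≤ (ℓ v).2 ∧ (ℓ v).2 ≤ qbSize q (ℓ v).1) ∧
  (∀ i j : ℕ, i ≤ m → 1 ≤ j → j ≤ qbSize q i → ∃ v, ℓ v = (i, j)) ∧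
  (∀ v w : V, v ≠ w → G.mult v w =
    if (ℓ v).1 = (ℓ w).1 then 1
    else if (ℓ v).1 + 1 = (ℓ w).1 ∧ (ℓ v).2 = 1 then (∑ i ∈ Finset.Icc 1 (ℓ v).1, q i) + 2
    else if (ℓ w).1 + 1 = (ℓ v).1 ∧ (ℓ w).2 = 1 then (∑ i ∈ Finset.Icc 1 (ℓ w).1, q i) + 2
    else 0)

/-- A graph is a quasi-banana graph if it is isomorphic to some `QB_m(N)`. -/
def Multigraph.IsQuasiBanana (G : Multigraph V) : Prop :=
  ∃ (m : ℕ) (q : ℕ → ℕ) (ℓ : V → ℕ × ℕ), G.IsQBLabelling m q ℓ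

/-- The graph obtained from `G'` by attaching a complete graph `K_n`: `n` new vertices
pairwise joined by exactly one edge, each joined to `v` by exactly `k+1` edges. -/
def attachComplete (G' : Multigraph V) (v : V) (k n : ℕ) : Multigraph (V ⊕ Fin n) where
  mult x y :=
    match x, y with
    | Sum.inl a, Sum.inl b => G'.mult a b
    | Sum.inl a, Sum.inr _ => if a = v then k + 1 else 0
    | Sum.inr _, Sum.inl b => if b = v then k + 1 else 0
    | Sum.inr i, Sum.inr j => if i = j then 0 else 1
  symm := by
    rintro (a | i) (b | j)
    · exact G'.symm a b
    · rfl
    · rfl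
    · by_cases h : i = j
      · simp [h]
      · simp [h, Ne.symm h]
  loopless := by
    rintro (a | i)
    · exact G'.loopless a
    · simp

/-!
A quasi-banana graph is built up from a vertex by attaching cliques `C`, each vertex of which is
joined by `n + 1` edges to one vertex of the graph built so far, where `n` is its number of
vertices. Both halves of the theorem are inductions over the attached cliques.

Firing inside `C` moves its configuration by multiples of `n + #C + 1`, up to a common shift, so
the configuration may be cut at any residue `σ` modulo `n + #C + 1` and sorted. If the sorted values
are at most `n, n + 1, …`, the configuration is superstable, and its chips cannot help the rest of
the graph. As `σ` advances, the excesses over `n, n + 1, …` are the values over a sliding window of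
an integer walk that never goes up by more than one. A discrete crossing argument finds a window
whose positive and negative parts are both bounded by staircases `l + (l - 1) + ⋯`, and the positive
part is added to an effective divisor `E` of small degree with `D - E` not winnable. This bounds the
rank of an arbitrary divisor `D`. Conversely, cutting where the walk is about to become positive
shows that, on a graph with `k` vertices, `l (k + 1)` chips on the root survive the removal of any
effective divisor of degree less than the staircase with `k + 1` steps starting at `l + 1`.
-/

/-! ### Staircases -/

/-- The degree of the positive part of the arithmetic progression `l, l - 1, …, l - n + 1`. Its
negative part has degree `staircase n (n - 1 - l)`, by reversing the progression. -/
def staircase (n : ℕ) (l : ℤ) : ℤ := ∑ i ∈ range n, max (l - i) 0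

lemma staircase_nonneg (n : ℕ) (l : ℤ) : 0 ≤ staircase n l :=
  sum_nonneg fun _ _ ↦ le_max_right _ _

lemma staircase_mono (n : ℕ) : Monotone (staircase n) := fun _ _ h ↦
  sum_le_sum fun _ _ ↦ max_le_max_right _ (sub_le_sub_right h _)

lemma staircase_succ (n : ℕ) (l : ℤ) :
    staircase (n + 1) l = max l 0 + staircase n (l - 1) := by
  simp only [staircase, sum_range_succ', Nat.cast_zero, sub_zero, Nat.cast_succ]
  rw [add_comm]
  congr! 3
  lia

lemma staircase_eq_zero {n : ℕ} {l : ℤ} (hl : l ≤ 0) : staircase n l = 0 :=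
  sum_eq_zero fun i _ ↦ max_eq_right (by lia)

lemma staircase_reflect (n : ℕ) (l : ℤ) :
    staircase n (n - 1 - l) = ∑ i ∈ range n, max (-(l - i)) 0 := by
  rw [staircase, ← sum_range_reflect]
  refine sum_congr rfl fun i hi ↦ ?_
  have := mem_range.1 hi
  congr 1
  lia

lemma two_mul_staircase {n : ℕ} {l : ℤ} (h₀ : 0 ≤ l) (h : l ≤ n) :
    2 * staircase n l = l * (l + 1) := by
  induction n generalizing l with
  | zero => rw [le_antisymm h h₀]; rfl
  | succ n ih =>
    rw [staircase_succ, max_eq_left h₀]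
    obtain rfl | h₁ := h₀.eq_or_lt
    · rw [staircase_eq_zero (by lia)]; rfl
    · linarith [ih (l := l - 1) (by lia) (by push_cast at h; lia)]

lemma two_mul_staircase_le {n m : ℕ} {l : ℤ} (h : l < m) :
    2 * staircase n l ≤ m * (m - 1) := by
  induction m generalizing n l with
  | zero => rw [staircase_eq_zero (by exact_mod_cast h.le)]; simp
  | succ m ih =>
    cases n with
    | zero => push_cast; simp only [staircase, range_zero, sum_empty]; nlinarith
    | succ n =>
      have := ih (n := n) (l := l - 1) (by push_cast at h; lia)
      have : max l 0 ≤ m := max_le (by push_cast at h; lia) (by lia)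
      rw [staircase_succ]
      push_cast
      linarith

lemma two_mul_choose_two (n : ℕ) : 2 * (n.choose 2 : ℤ) = n * (n - 1) := by
  have := Nat.cast_choose_two ℚ n
  qify
  linarith

lemma choose_two_add (n q : ℕ) :
    ((n + q).choose 2 : ℤ) = n.choose 2 + ∑ i ∈ range q, ((n : ℤ) + i) := by
  induction q with
  | zero => simp
  | succ q ih =>
    rw [sum_range_succ, ← add_assoc (n.choose 2 : ℤ), ← ih, ← add_assoc,
      Nat.choose_succ_succ' (n + q) 1, Nat.choose_one_right]
    push_cast
    ring

lemma sum_range_natCast (n : ℕ) : ∑ i ∈ range n, (i : ℤ) = n.choose 2 := by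
  simpa using (choose_two_add 0 n).symm

lemma staircase_sub_reflect (n : ℕ) (l : ℤ) :
    staircase n l - staircase n (n - 1 - l) = n * l - n.choose 2 := by
  rw [staircase_reflect, staircase, ← sum_sub_distrib, ← sum_range_natCast, ← nsmul_eq_mul,
    ← card_range n, ← sum_const, card_range, ← sum_sub_distrib]
  exact sum_congr rfl fun _ _ ↦ max_zero_sub_max_neg_zero_eq_self _

lemma exists_clamp_staircase_le {n : ℕ} (hn : 0 < n) (l : ℤ) :
    ∃ l' : ℤ, 0 ≤ l' ∧ l' < n ∧ staircase n l' ≤ staircase n l ∧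
      staircase n (n - 1 - l') ≤ staircase n (n - 1 - l) := by
  obtain h | h := lt_or_ge l 0
  · exact ⟨0, le_rfl, by lia, (staircase_eq_zero le_rfl).trans_le (staircase_nonneg _ _),
      staircase_mono n (by lia)⟩
  obtain h' | h' := lt_or_ge l n
  · exact ⟨l, h, h', le_rfl, le_rfl⟩
  · exact ⟨n - 1, by lia, by lia, staircase_mono n (by lia),
      (staircase_eq_zero (by lia)).trans_le (staircase_nonneg _ _)⟩

lemma two_mul_sum_max_le_of_exists_pred {ι : Type*} {s : Finset ι} {a : ι → ℤ}
    (h : ∀ i ∈ s, 2 ≤ a i → ∃ j ∈ s, a j = a i - 1) :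
    2 * ∑ i ∈ s, max (a i) 0 ≤ (#{i ∈ s | 1 ≤ a i} : ℤ) * (#{i ∈ s | 1 ≤ a i} + 1) := by
  classical
  suffices (∀ i ∈ s, a i ≤ #{i ∈ s | 1 ≤ a i}) ∧ 2 * ∑ i ∈ s, max (a i) 0 ≤
      (#{i ∈ s | 1 ≤ a i} : ℤ) * (#{i ∈ s | 1 ≤ a i} + 1) from this.2
  induction s using Finset.induction_on_max_value a with
  | empty => simp
  | insert i s hi hmax ih =>
    have hpred : ∀ j ∈ s, 2 ≤ a j → ∃ k ∈ s, a k = a j - 1 := fun j hj h₂ ↦ by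
      obtain ⟨k, hk, hkj⟩ := h j (mem_insert_of_mem hj) h₂
      refine ⟨k, (mem_insert.1 hk).resolve_left ?_, hkj⟩
      rintro rfl
      linarith [hmax j hj]
    obtain ⟨hle, hsum⟩ := ih hpred
    rw [sum_insert hi]
    obtain hneg | hpos := lt_or_ge (a i) 1
    · rw [filter_insert, if_neg (by lia), max_eq_right (by lia), zero_add]
      exact ⟨forall_mem_insert _ _ _ |>.2 ⟨by lia, hle⟩, hsum⟩
    · have hlei : a i ≤ #{i ∈ s | 1 ≤ a i} + 1 := by
        obtain h₂ | h₂ := lt_or_ge (a i) 2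
        · lia
        · obtain ⟨k, hk, hki⟩ := h i (mem_insert_self _ _) h₂
          have hne : k ≠ i := by rintro rfl; lia
          linarith [hle k ((mem_insert.1 hk).resolve_left hne)]
      rw [filter_insert, if_pos hpos, max_eq_left (by lia), card_insert_of_notMem (by simp [hi])]
      push_cast
      exact ⟨forall_mem_insert _ _ _ |>.2 ⟨hlei, fun j hj ↦ (hle j hj).trans (by lia)⟩,
        by linarith⟩

lemma staircase_le_sum_max {s : Finset ℤ} {l : ℤ} (h : #s * l - (#s).choose 2 ≤ ∑ z ∈ s, z) :
    staircase #s l ≤ ∑ z ∈ s, max z 0 := by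
  have hsplit := sum_filter_add_sum_filter_not s (0 < ·) fun z ↦ z
  set p := #{z ∈ s | 0 < z}
  set n := #{z ∈ s | ¬ 0 < z}
  have hpos : ∑ z ∈ s, max z 0 = ∑ z ∈ s with 0 < z, z := by
    rw [sum_filter]
    exact sum_congr rfl fun z _ ↦ by split_ifs <;> lia
  obtain hlp | hpl := le_or_gt l p
  · have hle : ∑ i ∈ range p, ((1 : ℤ) + i) ≤ ∑ z ∈ s with 0 < z, z :=
      sum_range_le_sum fun z hz ↦ (mem_filter.1 hz).2
    have := two_mul_staircase_le (n := #s) (l := l) (m := p + 1) (by push_cast; lia)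
    rw [sum_add_distrib, sum_range_natCast] at hle
    simp only [sum_const, card_range, nsmul_eq_mul, mul_one] at hle
    push_cast at this
    linarith [two_mul_choose_two p]
  · have hle : ∑ z ∈ s with ¬ 0 < z, z ≤ ∑ i ∈ range n, ((0 : ℤ) - i) :=
      sum_le_sum_range fun z hz ↦ not_lt.1 (mem_filter.1 hz).2
    have := two_mul_staircase_le (n := #s) (l := #s - 1 - l) (m := n)
      (by have := card_filter_add_card_filter_not (s := s) (0 < ·); lia)
    simp only [zero_sub, sum_neg_distrib, sum_range_natCast] at hle
    linarith [two_mul_choose_two n, staircase_sub_reflect #s l, hsplit]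

lemma injOn_of_image_eq_range {ι : Type*} {s : Finset ι} {p : ι → ℕ} (hp : s.image p = range #s) :
    Set.InjOn p s := card_image_iff.1 (by rw [hp, card_range])

lemma sum_eq_sum_range_of_image_eq {ι : Type*} {s : Finset ι} {p : ι → ℕ}
    (hp : s.image p = range #s) (F : ℕ → ℤ) : ∑ w ∈ s, F (p w) = ∑ i ∈ range #s, F i := by
  rw [← hp, sum_image (injOn_of_image_eq_range hp)]

/-- The integers `b - p w - #s * f w` are pairwise distinct, as they are distinct modulo `#s`. -/
lemma staircase_le_sum_of_image_eq_range {ι : Type*} {s : Finset ι} {p : ι → ℕ}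
    (hp : s.image p = range #s) (b : ℤ) (f : ι → ℤ) :
    staircase #s (b - ∑ w ∈ s, f w) ≤ ∑ w ∈ s, max (b - p w - #s * f w) 0 := by
  have hlt : ∀ w ∈ s, p w < #s := fun w hw ↦ mem_range.1 (hp ▸ mem_image_of_mem p hw)
  have hinj : Set.InjOn (fun w ↦ b - p w - #s * f w) s := fun v hv w hw hvw ↦ by
    have : (p v : ℤ) ≡ p w [ZMOD #s] := Int.modEq_iff_dvd.2 ⟨f v - f w, by linarith⟩
    exact injOn_of_image_eq_range hp hv hw
      (Nat.ModEq.eq_of_lt_of_lt (Int.natCast_modEq_iff.1 this) (hlt v hv) (hlt w hw))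
  have hcard := card_image_of_injOn hinj
  have := staircase_le_sum_max (s := s.image fun w ↦ b - p w - #s * f w)
    (l := b - ∑ w ∈ s, f w) (by
      rw [hcard, sum_image hinj, sum_sub_distrib, sum_sub_distrib, ← sum_range_natCast, ← mul_sum,
        sum_eq_sum_range_of_image_eq hp (fun i ↦ (i : ℤ)), sum_const, nsmul_eq_mul]
      linarith)
  rwa [hcard, sum_image hinj] at this

lemma staircase_add_card_le {ι : Type*} {C : Finset ι} {p : ι → ℕ} (hp : C.image p = range #C)
    (k : ℕ) (b : ℤ) (f : ι → ℤ) :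
    staircase (k + #C) (b - ∑ w ∈ C, f w) ≤
      staircase k b + ∑ w ∈ C, max (b - (k + p w) - (k + #C) * f w) 0 := by
  have himage : ((range k).disjSum C).image (Sum.elim id (k + p ·)) =
      range #((range k).disjSum C) := by
    rw [card_disjSum, card_range, range_add_eq_union, ← hp]
    ext i
    simp
  have := staircase_le_sum_of_image_eq_range himage b (Sum.elim 0 f)
  simpa [sum_disjSum, staircase] using this

/-! ### Periodic walks -/

lemma card_Ioc_add_natCast (σ : ℤ) (m : ℕ) : #(Ioc σ (σ + m)) = m := by simp

/-- An integer walk whose steps go up by at most one and which rises by `κ` over each period, of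
length `m + 1`. Its *windows* are the intervals `Ioc σ (σ + m)`, one point short of a period. -/
structure IsPeriodicWalk (a : ℤ → ℤ) (m κ : ℕ) : Prop where
  rise_pos : 0 < κ
  step : ∀ s, a (s + 1) ≤ a s + 1
  period : ∀ s, a (s + m + 1) = a s + κ

namespace IsPeriodicWalk

variable {a : ℤ → ℤ} {m κ : ℕ}

lemma apply_add_mul (h : IsPeriodicWalk a m κ) (s t : ℤ) :
    a (s + t * (m + 1)) = a s + t * κ := by
  induction t with
  | zero => simp
  | succ t ih =>
    rw [show s + (t + 1 : ℤ) * (m + 1) = s + t * (m + 1) + m + 1 by ring, h.period, ih]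
    ring
  | pred t ih =>
    have := h.period (s + (-t - 1 : ℤ) * (m + 1))
    rw [show s + (-t - 1 : ℤ) * (m + 1) + m + 1 = s + -t * (m + 1) by ring, ih] at this
    linarith

lemma exists_abs_sub_ediv_le (h : IsPeriodicWalk a m κ) :
    ∃ B, ∀ s, |a s - s / (m + 1) * κ| ≤ B := by
  refine ⟨∑ r ∈ Ico 0 (m + 1 : ℤ), |a r|, fun s ↦ ?_⟩
  have hs : a s - s / (m + 1) * κ = a (s % (m + 1)) := by
    rw [sub_eq_iff_eq_add, ← h.apply_add_mul, mul_comm, Int.emod_add_mul_ediv]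
  rw [hs]
  exact single_le_sum (f := fun r ↦ |a r|) (fun _ _ ↦ abs_nonneg _)
    (mem_Ico.2 ⟨Int.emod_nonneg _ (by lia), Int.emod_lt_of_pos _ (by lia)⟩)

lemma tendsto_atTop (h : IsPeriodicWalk a m κ) : Filter.Tendsto a .atTop .atTop := by
  obtain ⟨B, hB⟩ := h.exists_abs_sub_ediv_le
  refine Filter.tendsto_atTop_atTop.2 fun b ↦ ⟨(|b| + B) * (m + 1), fun s hs ↦ ?_⟩
  have hdiv : |b| + B ≤ s / (m + 1) := (Int.le_ediv_iff_mul_le (by lia)).2 hs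
  have hκ : (1 : ℤ) ≤ κ := by exact_mod_cast h.rise_pos
  nlinarith [abs_le.1 (hB s), le_abs_self b, abs_nonneg b, (abs_nonneg _).trans (hB s)]

lemma tendsto_atBot (h : IsPeriodicWalk a m κ) : Filter.Tendsto a .atBot .atBot := by
  obtain ⟨B, hB⟩ := h.exists_abs_sub_ediv_le
  refine Filter.tendsto_atBot_atBot.2 fun b ↦ ⟨-(|b| + B) * (m + 1), fun s hs ↦ ?_⟩
  have hdiv : s / (m + 1) ≤ -(|b| + B) := Int.ediv_le_of_le_mul (by lia) hs
  have hκ : (1 : ℤ) ≤ κ := by exact_mod_cast h.rise_pos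
  nlinarith [abs_le.1 (hB s), neg_abs_le b, abs_nonneg b, (abs_nonneg _).trans (hB s)]

lemma exists_apply_eq (h : IsPeriodicWalk a m κ) {s t v : ℤ} (hst : s ≤ t) (hs : a s ≤ v)
    (ht : v ≤ a t) : ∃ u ∈ Icc s t, a u = v := by
  induction t, hst using Int.leInduction with
  | base => exact ⟨s, by simp, hs.antisymm ht⟩
  | succ t hst ih =>
    obtain rfl | hlt := ht.eq_or_lt
    · exact ⟨t + 1, mem_Icc.2 ⟨by lia, le_rfl⟩, rfl⟩
    · obtain ⟨u, hu, rfl⟩ := ih (by linarith [h.step t])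
      exact ⟨u, Icc_subset_Icc_right (by lia) hu, rfl⟩

/-- A descent inside the window is made up for on one of the ascents to its two ends. -/
lemma exists_mem_window_apply_eq (h : IsPeriodicWalk a m κ) {σ s t v : ℤ}
    (hs : s ∈ Ioc σ (σ + m)) (ht : t ∈ Ioc σ (σ + m)) (hsv : a s ≤ v) (hvt : v ≤ a t) :
    ∃ u ∈ Ioc σ (σ + m), a u = v := by
  rw [mem_Ioc] at hs ht
  obtain hfirst | hfirst := le_or_gt (a (σ + 1)) v
  · obtain ⟨u, hu, rfl⟩ := h.exists_apply_eq (by lia) hfirst hvt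
    rw [mem_Icc] at hu
    exact ⟨u, mem_Ioc.2 (by lia), rfl⟩
  · have hlast : v < a (σ + m + 1) := by
      linarith [h.period σ, h.step σ, (Nat.cast_pos (α := ℤ)).2 h.rise_pos]
    obtain ⟨u, hu, rfl⟩ := h.exists_apply_eq (by lia) hsv hlast.le
    have hne : u ≠ σ + m + 1 := by rintro rfl; exact hlast.false
    rw [mem_Icc] at hu
    exact ⟨u, mem_Ioc.2 (by lia), rfl⟩

lemma exists_window_nonpos (h : IsPeriodicWalk a m κ) :
    ∃ σ : ℤ, (∀ s ≤ σ + m, a s ≤ 0) ∧ 1 ≤ a (σ + m + 1) := by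
  obtain ⟨b, hb⟩ := Filter.eventually_atBot.1 (h.tendsto_atBot.eventually_le_atBot 0)
  obtain ⟨t, ht⟩ := (h.tendsto_atTop.eventually_ge_atTop 1).exists
  obtain ⟨u, hu, hleast⟩ := Int.exists_least_of_bdd (P := fun s ↦ 1 ≤ a s)
    ⟨b, fun s hs ↦ by_contra fun hlt ↦ by linarith [hb s (by lia)]⟩ ⟨t, ht⟩
  refine ⟨u - m - 1, fun s hs ↦ ?_, by ring_nf; exact hu⟩
  by_contra! hpos
  linarith [hleast s hpos]

lemma exists_crossing (h : IsPeriodicWalk a m κ) {l : ℤ} (h₀ : 0 ≤ l) (hl : l < m) :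
    ∃ σ : ℤ, (#{s ∈ Ioc σ (σ + m) | 1 ≤ a s} : ℤ) ≤ l ∧
      l < #{s ∈ Ioc (σ + 1) (σ + 1 + m) | 1 ≤ a s} := by
  obtain ⟨b, hb⟩ := Filter.eventually_atBot.1 (h.tendsto_atBot.eventually_le_atBot 0)
  obtain ⟨t, ht⟩ := Filter.eventually_atTop.1 (h.tendsto_atTop.eventually_ge_atTop 1)
  obtain ⟨σ, hσ, hgreatest⟩ := Int.exists_greatest_of_bdd
    (P := fun σ ↦ (#{s ∈ Ioc σ (σ + m) | 1 ≤ a s} : ℤ) ≤ l)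
    ⟨t, fun σ hσ ↦ by
      by_contra! hlt
      rw [filter_true_of_mem fun s hs ↦ ht s (by rw [mem_Ioc] at hs; lia),
        card_Ioc_add_natCast] at hσ
      lia⟩
    ⟨b - m, by
      rwa [filter_false_of_mem fun s hs ↦ by
        rw [mem_Ioc] at hs; linarith [hb s (by lia)], card_empty]⟩
  exact ⟨σ, hσ, by by_contra! hle; linarith [hgreatest _ hle]⟩

lemma card_window_pos_le (h : IsPeriodicWalk a m κ) (hm : 0 < m) (σ : ℤ) :
    #{s ∈ Ioc (σ + 1) (σ + 1 + m) | 1 ≤ a s} ≤ #{s ∈ Ioc σ (σ + m) | 0 ≤ a s} := by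
  by_cases hzero : ∃ z ∈ Ioc σ (σ + m), a z = 0
  · obtain ⟨z, hz, hz0⟩ := hzero
    calc #{s ∈ Ioc (σ + 1) (σ + 1 + m) | 1 ≤ a s}
        ≤ #(insert (σ + m + 1) {s ∈ Ioc σ (σ + m) | 1 ≤ a s}) := card_le_card fun s hs ↦ by
          grind
      _ ≤ #{s ∈ Ioc σ (σ + m) | 1 ≤ a s} + 1 := card_insert_le _ _
      _ = #(insert z {s ∈ Ioc σ (σ + m) | 1 ≤ a s}) := by
          rw [card_insert_of_notMem (by simp [hz0])]
      _ ≤ #{s ∈ Ioc σ (σ + m) | 0 ≤ a s} := card_le_card fun s hs ↦ by grind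
  obtain hlast | hlast := le_or_gt (a (σ + m + 1)) 0
  · exact card_le_card fun s hs ↦ by grind
  · have hmem : σ + m ∈ Ioc σ (σ + m) := mem_Ioc.2 (by lia)
    rw [filter_true_of_mem (s := Ioc σ (σ + m)) fun s hs ↦ ?_]
    · exact (card_filter_le _ _).trans (by simp only [card_Ioc_add_natCast, le_rfl])
    · by_contra! hneg
      exact hzero (h.exists_mem_window_apply_eq hs hmem hneg.le (by linarith [h.step (σ + m)]))

lemma exists_window (h : IsPeriodicWalk a m κ) {l : ℤ} (h₀ : 0 ≤ l) (hl : l < m) :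
    ∃ σ : ℤ, ∑ s ∈ Ioc σ (σ + m), max (a s) 0 ≤ staircase m l ∧
      ∑ s ∈ Ioc σ (σ + m), max (-a s) 0 ≤ staircase m (m - 1 - l) := by
  obtain ⟨σ, hpos, hcross⟩ := h.exists_crossing h₀ hl
  have hnonneg := h.card_window_pos_le (by lia) σ
  refine ⟨σ, ?_, ?_⟩
  · obtain ⟨z, hz, hz0⟩ : ∃ z ∈ Ioc σ (σ + m), a z < 1 := by
      by_contra! hall
      rw [filter_true_of_mem hall, card_Ioc_add_natCast] at hpos
      lia
    have := two_mul_sum_max_le_of_exists_pred (s := Ioc σ (σ + m)) (a := a) fun s hs h₂ ↦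
      h.exists_mem_window_apply_eq hz hs (by lia) (by lia)
    nlinarith [two_mul_staircase h₀ hl.le]
  · have hsplit := card_filter_add_card_filter_not (s := Ioc σ (σ + m)) (0 ≤ a ·)
    obtain ⟨z, hz⟩ : {s ∈ Ioc σ (σ + m) | 0 ≤ a s}.Nonempty := card_pos.1 (by lia)
    have := two_mul_sum_max_le_of_exists_pred (s := Ioc σ (σ + m)) (a := fun s ↦ -a s)
      fun s hs h₂ ↦ by
      obtain ⟨u, hu, hus⟩ := h.exists_mem_window_apply_eq (v := a s + 1) hs (mem_filter.1 hz).1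
        (by lia) (by linarith [(mem_filter.1 hz).2])
      exact ⟨u, hu, by lia⟩
    have hneg : {s ∈ Ioc σ (σ + m) | ¬ 0 ≤ a s} = {s ∈ Ioc σ (σ + m) | 1 ≤ -a s} :=
      filter_congr fun s _ ↦ by lia
    rw [hneg, card_Ioc_add_natCast] at hsplit
    nlinarith [two_mul_staircase (n := m) (l := m - 1 - l) (by lia) (by lia)]

end IsPeriodicWalk

/-! ### Sorting a configuration on a clique -/

lemma sum_Ioc_add_sum_Ioc {a b c : ℤ} (hab : a ≤ b) (hbc : b ≤ c) (g : ℤ → ℤ) :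
    ∑ t ∈ Ioc a b, g t + ∑ t ∈ Ioc b c, g t = ∑ t ∈ Ioc a c, g t := by
  rw [← sum_union (Ioc_disjoint_Ioc_of_le le_rfl), Ioc_union_Ioc_eq_Ioc hab hbc]

lemma sum_Ioc_sub_one_add {a b : ℤ} (hab : a ≤ b) (g : ℤ → ℤ) :
    ∑ t ∈ Ioc a b, g (t - 1) + g b = g a + ∑ t ∈ Ioc a b, g t := by
  induction b, hab using Int.leInduction with
  | base => simp
  | succ b hab ih =>
    rw [← insert_Ioc_right_eq_Ioc_add_one hab, sum_insert (by simp), sum_insert (by simp),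
      add_sub_cancel_right]
    linarith

/-- With `p` numbering `C` by increasing `z`, a new largest value `z x` lowers the heights
`t - #{z < t}` by one exactly for `t > z x`, which trades the top height for `z x - #C`. -/
lemma exists_numbering_sum_sub_card_lt {α : Type*} (C : Finset α) (z : α → ℤ) {m : ℕ}
    (hz : ∀ w ∈ C, 0 ≤ z w ∧ z w ≤ m) (hC : #C ≤ m) :
    ∃ p : α → ℕ, C.image p = range #C ∧ ∀ φ : ℤ → ℤ,
      ∑ w ∈ C, φ (z w - p w) + ∑ v ∈ Ioc 0 (m - #C : ℤ), φ v =
        ∑ t ∈ Ioc 0 (m : ℤ), φ (t - #{w ∈ C | z w < t}) := by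
  classical
  induction C using Finset.induction_on_max_value z with
  | empty => exact ⟨0, by simp⟩
  | insert x C hx hmax ih =>
    rw [card_insert_of_notMem hx] at hC
    obtain ⟨h₀, hm⟩ := hz x (mem_insert_self _ _)
    obtain ⟨p, hp, hsum⟩ := ih (fun w hw ↦ hz w (mem_insert_of_mem hw)) (by lia)
    have hupdate : ∀ w ∈ C, Function.update p x #C w = p w := fun w hw ↦
      Function.update_of_ne (by rintro rfl; exact hx hw) _ _
    refine ⟨Function.update p x #C, ?_, fun φ ↦ ?_⟩
    · rw [card_insert_of_notMem hx, range_add_one, image_insert, Function.update_self,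
        image_congr hupdate, hp]
    have hlow : ∑ t ∈ Ioc 0 (z x), φ (t - #{w ∈ insert x C | z w < t}) =
        ∑ t ∈ Ioc 0 (z x), φ (t - #{w ∈ C | z w < t}) := sum_congr rfl fun t ht ↦ by
      rw [filter_insert, if_neg (mem_Ioc.1 ht).2.not_gt]
    have hhigh : ∑ t ∈ Ioc (z x) m, φ (t - #{w ∈ C | z w < t}) =
        ∑ t ∈ Ioc (z x) m, φ (t - #C) := sum_congr rfl fun t ht ↦ by
      rw [filter_true_of_mem fun w hw ↦ (hmax w hw).trans_lt (mem_Ioc.1 ht).1]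
    have hhigh' : ∑ t ∈ Ioc (z x) m, φ (t - #{w ∈ insert x C | z w < t}) =
        ∑ t ∈ Ioc (z x) m, φ (t - 1 - #C) := sum_congr rfl fun t ht ↦ by
      rw [filter_true_of_mem fun w hw ↦ ?_, card_insert_of_notMem hx, Nat.cast_succ, sub_sub,
        add_comm]
      exact ((mem_insert.1 hw).elim (fun h ↦ h ▸ le_rfl) (hmax w)).trans_lt (mem_Ioc.1 ht).1
    have htop : ∑ v ∈ Ioc 0 (m - #C : ℤ), φ v =
        φ (m - #C) + ∑ v ∈ Ioc 0 (m - (#C + 1) : ℤ), φ v := by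
      rw [← sub_sub, ← sum_insert (by simp), insert_Ioc_sub_one_right_eq_Ioc (by lia)]
    have hshift := sum_Ioc_sub_one_add hm fun t ↦ φ (t - #C)
    have hold := hsum φ
    rw [← sum_Ioc_add_sum_Ioc h₀ hm, hhigh] at hold
    rw [← sum_Ioc_add_sum_Ioc h₀ hm, hlow, hhigh', card_insert_of_notMem hx, sum_insert hx,
      Function.update_self, sum_congr rfl fun w hw ↦ by rw [hupdate w hw]]
    push_cast
    linarith

section Clique

variable {α : Type*} (C : Finset α) (n : ℕ)

/-- The chips on the vertices of a clique `C`, each of them joined to an outside root by `n + 1`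
edges, after firing every `u ∈ C` exactly `f u` times and the root not at all. -/
def cliqueFire (f x : α → ℤ) (w : α) : ℤ := x w - (n + #C + 1) * f w + ∑ u ∈ C, f u

/-- As the residue `σ` where the configuration `x` is cut modulo `n + #C + 1` advances, the
heights of this walk over the window at `σ` are the excesses over `n, n + 1, …` of the sorted
configuration cut at `σ`, together with a block of `n` consecutive integers. -/
def cliqueWalk (x : α → ℤ) (s : ℤ) : ℤ := s - n + ∑ w ∈ C, (x w - s) / (n + #C + 1)

variable {C n} {f g x : α → ℤ}

lemma cliqueFire_add : cliqueFire C n (f + g) x = cliqueFire C n g (cliqueFire C n f x) := by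
  funext w
  simp only [cliqueFire, Pi.add_apply, sum_add_distrib]
  ring

lemma cliqueFire_single [DecidableEq α] {i : α} (hi : i ∈ C) (l : ℤ) (w : α) :
    cliqueFire C n (Pi.single i l) x w =
      x w + l - Pi.single (M := fun _ ↦ ℤ) i (l * (n + #C + 1)) w := by
  rw [cliqueFire, sum_pi_single', if_pos hi]
  obtain rfl | hne := eq_or_ne w i
  · simp only [Pi.single_eq_same]
    ring
  · simp only [Pi.single_eq_of_ne hne]
    ring

lemma isPeriodicWalk_cliqueWalk (C : Finset α) (n : ℕ) (x : α → ℤ) :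
    IsPeriodicWalk (cliqueWalk C n x) (n + #C) (n + 1) where
  rise_pos := n.succ_pos
  step s := by
    have : ∑ w ∈ C, (x w - (s + 1)) / (n + #C + 1) ≤ ∑ w ∈ C, (x w - s) / (n + #C + 1 : ℤ) :=
      sum_le_sum fun w _ ↦ Int.ediv_le_ediv (by lia) (by lia)
    simp only [cliqueWalk]
    linarith
  period s := by
    have (w : α) : (x w - (s + (n + #C : ℕ) + 1)) / (n + #C + 1) =
        (x w - s) / (n + #C + 1 : ℤ) - 1 := by
      rw [show x w - (s + (n + #C : ℕ) + 1) = x w - s + -1 * (n + #C + 1) by push_cast; ring,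
        Int.add_mul_ediv_right _ _ (by lia)]
      rfl
    simp only [cliqueWalk, this, sum_sub_distrib, sum_const, nsmul_eq_mul]
    push_cast
    ring

lemma ediv_sub_eq_sub_ite {N y t : ℤ} (ht₀ : 0 ≤ t) (ht : t ≤ N) (hN : 0 < N) :
    (y - t) / N = y / N - if y % N < t then 1 else 0 := by
  have h₀ := Int.emod_nonneg y hN.ne'
  have h₁ := Int.emod_lt_of_pos y hN
  have h := Int.mul_ediv_add_emod y N
  split_ifs with hlt
  · exact (Int.ediv_eq_iff_of_pos hN).2 ⟨by linarith, by linarith⟩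
  · exact (Int.ediv_eq_iff_of_pos hN).2 ⟨by linarith, by linarith⟩

lemma cliqueWalk_add (x : α → ℤ) (σ : ℤ) {t : ℤ} (ht₀ : 0 ≤ t) (ht : t ≤ n + #C) :
    cliqueWalk C n x (σ + t) =
      cliqueWalk C n x σ + (t - #{w ∈ C | (x w - σ) % (n + #C + 1) < t}) := by
  have (w : α) : (x w - (σ + t)) / (n + #C + 1) = (x w - σ) / (n + #C + 1 : ℤ) -
      if (x w - σ) % (n + #C + 1) < t then 1 else 0 := by
    rw [← sub_sub, ediv_sub_eq_sub_ite ht₀ (by lia) (by lia)]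
  simp only [cliqueWalk, this, sum_sub_distrib, sum_boole]
  ring

lemma sum_Ioc_add_eq_sum_Ioc_zero (c m : ℤ) (φ : ℤ → ℤ) :
    ∑ t ∈ Ioc c (c + m), φ t = ∑ t ∈ Ioc 0 m, φ (c + t) := by
  simpa using sum_map (Ioc 0 m) (addLeftEmbedding c) φ

lemma exists_cliqueFire_heights_eq (C : Finset α) (n : ℕ) (x : α → ℤ) (σ : ℤ) :
    ∃ (f : α → ℤ) (p : α → ℕ), C.image p = range #C ∧
      (∀ w ∈ C, cliqueWalk C n x σ + n ≤ cliqueFire C n f x w) ∧ ∀ φ : ℤ → ℤ,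
        ∑ w ∈ C, φ (cliqueFire C n f x w - (n + p w)) +
          ∑ v ∈ Ioc (cliqueWalk C n x σ) (cliqueWalk C n x σ + n), φ v =
        ∑ s ∈ Ioc σ (σ + (n + #C : ℕ)), φ (cliqueWalk C n x s) := by
  set a := cliqueWalk C n x σ with ha
  let z w := (x w - σ) % (n + #C + 1 : ℤ)
  have hz₀ (w : α) : 0 ≤ z w := Int.emod_nonneg _ (by lia)
  have hz (w : α) : z w ≤ (n + #C : ℕ) := by
    have : z w < n + #C + 1 := Int.emod_lt_of_pos _ (by lia)
    push_cast
    linarith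
  obtain ⟨p, hp, hsum⟩ :=
    exists_numbering_sum_sub_card_lt C z (fun w _ ↦ ⟨hz₀ w, hz w⟩) (Nat.le_add_left #C n)
  have hfire (w : α) : cliqueFire C n (fun w ↦ (x w - σ) / (n + #C + 1)) x w = a + n + z w := by
    have := Int.mul_ediv_add_emod (x w - σ) (n + #C + 1)
    simp only [cliqueFire, ha, cliqueWalk, z]
    linarith
  refine ⟨_, p, hp, fun w _ ↦ by linarith [hfire w, hz₀ w], fun φ ↦ ?_⟩
  rw [sum_Ioc_add_eq_sum_Ioc_zero, sum_Ioc_add_eq_sum_Ioc_zero]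
  have hheights : ∀ s ∈ Ioc 0 ((n + #C : ℕ) : ℤ),
      φ (cliqueWalk C n x (σ + s)) = φ (a + (s - #{w ∈ C | z w < s})) := fun s hs ↦ by
    rw [mem_Ioc] at hs
    rw [cliqueWalk_add x σ hs.1.le (by simpa using hs.2)]
  rw [sum_congr rfl hheights, ← hsum fun v ↦ φ (a + v), Nat.cast_add, add_sub_cancel_right]
  congr! 3 with w
  rw [hfire]
  ring

lemma exists_mem_le_card_sub_card {p : α → ℕ} (hp : C.image p = range #C) {M : Finset α}
    (hM : M ⊆ C) (hne : M.Nonempty) : ∃ w ∈ M, p w ≤ #C - #M := by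
  by_contra! hlt
  have hsub : M.image p ⊆ Ico (#C - #M + 1) #C := image_subset_iff.2 fun w hw ↦
    mem_Ico.2 ⟨hlt w hw, mem_range.1 (hp ▸ mem_image_of_mem p (hM hw))⟩
  have hcard := card_le_card hsub
  rw [Nat.card_Ico, card_image_of_injOn ((injOn_of_image_eq_range hp).mono hM)] at hcard
  have := hne.card_pos
  lia

/-- A configuration sorted below `n, n + 1, …` is superstable: on the vertices where `g` is
largest, firing `g` with positive total would cost more chips than are there. -/
lemma sum_nonpos_of_cliqueFire_nonneg {p : α → ℕ} (hp : C.image p = range #C)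
    (hx : ∀ w ∈ C, x w ≤ n + p w) (hg : ∀ w ∈ C, 0 ≤ cliqueFire C n g x w) :
    ∑ w ∈ C, g w ≤ 0 := by
  obtain rfl | hne := C.eq_empty_or_nonempty
  · rfl
  obtain ⟨u, hu, hmax⟩ := C.exists_max_image g hne
  have hM : {w ∈ C | g w = g u}.Nonempty := ⟨u, by simp [hu]⟩
  obtain ⟨w, hwM, hw⟩ := exists_mem_le_card_sub_card hp (filter_subset _ _) hM
  have hcard := card_filter_le C (g · = g u)
  set M := {w ∈ C | g w = g u}
  have hsum : ∑ w ∈ C, g w ≤ #C * g u - (#C - #M) := calc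
    ∑ w ∈ C, g w ≤ ∑ w ∈ C, (g u - 1 + if g w = g u then 1 else 0) := sum_le_sum fun w hw ↦ by
      have := hmax w hw
      split_ifs <;> lia
    _ = #C * g u - (#C - #M) := by
      rw [sum_add_distrib, sum_const, sum_boole, nsmul_eq_mul]
      ring
  obtain ⟨hwC, hwu⟩ := mem_filter.1 hwM
  have hpos := hg w hwC
  rw [cliqueFire, hwu] at hpos
  have hu₀ : g u ≤ 0 := by
    by_contra! hlt
    have : (p w : ℤ) ≤ #C - #M := by lia
    nlinarith [hx w hwC]
  exact sum_nonpos fun w hw ↦ (hmax w hw).trans hu₀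

end Clique

/-! ### Attaching a clique -/

namespace Multigraph

/-- `D` becomes nonnegative on `S` after some firing inside the subgraph induced on `S`. Working
with subsets of a fixed vertex type lets quasi-banana graphs be treated level by level. -/
def WinnableOn (G : Multigraph V) (S : Finset V) (D : V → ℤ) : Prop :=
  ∃ f : V → ℤ, ∀ w ∈ S, 0 ≤ D w - ∑ u ∈ S, (G.mult w u : ℤ) * (f w - f u)

/-- `C` is a clique disjoint from `S`, joined to `S` only through `#S + 1` edges from each of its
vertices to the root `ρ`. -/
structure AttachesClique (G : Multigraph V) (S : Finset V) (ρ : V) (C : Finset V) : Prop where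
  root_mem : ρ ∈ S
  disjoint : Disjoint S C
  mult_clique : ∀ v ∈ C, ∀ w ∈ C, v ≠ w → G.mult v w = 1
  mult_root : ∀ w ∈ C, G.mult w ρ = #S + 1
  mult_off_root : ∀ w ∈ C, ∀ u ∈ S, u ≠ ρ → G.mult w u = 0

/-- The subgraph induced on `S` is a quasi-banana graph, to which the next level can be attached
at the root `ρ`: a vertex with successive cliques attached, each at a vertex of the last one. -/
inductive QuasiBananaOn (G : Multigraph V) : Finset V → V → Prop
  | base (v : V) : QuasiBananaOn G {v} v
  | attach {S C : Finset V} {ρ ρ' : V} (hS : QuasiBananaOn G S ρ) (hC : G.AttachesClique S ρ C)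
      (hρ' : ρ' ∈ C) : QuasiBananaOn G (S ∪ C) ρ'

variable {G : Multigraph V} {S C : Finset V} {ρ : V} {D D' : V → ℤ}

lemma winnable_iff_winnableOn : G.Winnable D ↔ G.WinnableOn univ D := by
  constructor
  · rintro ⟨_, hE, f, rfl⟩
    exact ⟨f, fun w _ ↦ hE w⟩
  · rintro ⟨f, hf⟩
    exact ⟨_, fun w ↦ hf w (mem_univ w), f, rfl⟩

lemma WinnableOn.mono (h : G.WinnableOn S D) (hD : ∀ w ∈ S, D w ≤ D' w) : G.WinnableOn S D' := by
  obtain ⟨f, hf⟩ := h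
  exact ⟨f, fun w hw ↦ (hf w hw).trans (sub_le_sub_right (hD w hw) _)⟩

namespace AttachesClique

lemma sum_mult_of_mem_clique (h : G.AttachesClique S ρ C) {w : V} (hw : w ∈ C) (f : V → ℤ) :
    ∑ u ∈ S ∪ C, (G.mult w u : ℤ) * (f w - f u) =
      (#S + 1) * (f w - f ρ) + ∑ u ∈ C, (f w - f u) := by
  rw [sum_union h.disjoint, sum_eq_single_of_mem ρ h.root_mem fun u hu hne ↦ by
    rw [h.mult_off_root w hw u hu hne, Nat.cast_zero, zero_mul], h.mult_root w hw, Nat.cast_succ]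
  congr 1
  refine sum_congr rfl fun u hu ↦ ?_
  obtain rfl | hne := eq_or_ne w u
  · simp
  · rw [h.mult_clique w hw u hu hne, Nat.cast_one, one_mul]

lemma sum_mult_of_mem (h : G.AttachesClique S ρ C) {w : V} (hw : w ∈ S) (f : V → ℤ) :
    ∑ u ∈ S ∪ C, (G.mult w u : ℤ) * (f w - f u) = ∑ u ∈ S, (G.mult w u : ℤ) * (f w - f u) -
      Pi.single (M := fun _ ↦ ℤ) ρ ((#S + 1) * ∑ u ∈ C, (f u - f ρ)) w := by
  rw [sum_union h.disjoint, sub_eq_add_neg]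
  congr 1
  obtain rfl | hne := eq_or_ne w ρ
  · rw [Pi.single_eq_same, mul_sum, ← sum_neg_distrib]
    refine sum_congr rfl fun u hu ↦ ?_
    rw [G.symm, h.mult_root u hu]
    push_cast
    ring
  · rw [Pi.single_eq_of_ne hne, neg_zero]
    refine sum_eq_zero fun u hu ↦ ?_
    rw [G.symm, h.mult_off_root u hu w hw hne, Nat.cast_zero, zero_mul]

lemma winnableOn_union_iff (h : G.AttachesClique S ρ C) :
    G.WinnableOn (S ∪ C) D ↔ ∃ g : V → ℤ, (∀ w ∈ C, 0 ≤ cliqueFire C #S g D w) ∧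
      G.WinnableOn S (D + Pi.single ρ ((#S + 1) * ∑ w ∈ C, g w)) := by
  constructor
  · rintro ⟨f, hf⟩
    refine ⟨fun w ↦ f w - f ρ, fun w hw ↦ ?_, f, fun w hw ↦ ?_⟩
    · have := hf w (mem_union_right S hw)
      rw [h.sum_mult_of_mem_clique hw] at this
      simp only [sum_sub_distrib, sum_const, nsmul_eq_mul, cliqueFire] at this ⊢
      linarith
    · have := hf w (mem_union_left C hw)
      rw [h.sum_mult_of_mem hw] at this
      simp only [Pi.add_apply]
      linarith
  · rintro ⟨g, hg, f, hf⟩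
    let F w := if w ∈ C then f ρ + g w else f w
    have hFC : ∀ w ∈ C, F w = f ρ + g w := fun w hw ↦ if_pos hw
    have hFS : ∀ w ∈ S, F w = f w := fun w hw ↦ if_neg (disjoint_left.1 h.disjoint hw)
    refine ⟨F, fun w hw ↦ ?_⟩
    obtain hw | hw := mem_union.1 hw
    · have hlap : ∑ u ∈ S, (G.mult w u : ℤ) * (F w - F u) =
          ∑ u ∈ S, (G.mult w u : ℤ) * (f w - f u) := sum_congr rfl fun u hu ↦ by
        rw [hFS w hw, hFS u hu]
      have hroot : ∑ u ∈ C, (F u - F ρ) = ∑ u ∈ C, g u := sum_congr rfl fun u hu ↦ by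
        rw [hFC u hu, hFS ρ h.root_mem, add_sub_cancel_left]
      have := hf w hw
      rw [h.sum_mult_of_mem hw, hlap, hroot]
      simp only [Pi.add_apply] at this
      linarith
    · have hclique : ∑ u ∈ C, (F w - F u) = ∑ u ∈ C, (g w - g u) := sum_congr rfl fun u hu ↦ by
        rw [hFC w hw, hFC u hu, add_sub_add_left_eq_sub]
      have := hg w hw
      rw [h.sum_mult_of_mem_clique hw, hclique, hFC w hw, hFS ρ h.root_mem]
      simp only [sum_sub_distrib, sum_const, nsmul_eq_mul, cliqueFire] at this ⊢
      linarith

end AttachesClique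

end Multigraph

section Clique

variable {α : Type*} {C : Finset α} {n : ℕ} {f x : α → ℤ}

lemma sum_Ioc_add_natCast (a : ℤ) (n : ℕ) (φ : ℤ → ℤ) :
    ∑ v ∈ Ioc a (a + n), φ v = ∑ i ∈ range n, φ (a + n - i) := by
  refine sum_nbij' (fun v ↦ (a + n - v).toNat) (fun i ↦ a + n - i) ?_ ?_ ?_ ?_ ?_ <;> grind

lemma exists_cliqueFire_sum_max_le (C : Finset α) {n : ℕ} (x : α → ℤ) {l : ℤ} (h₀ : 0 ≤ l)
    (hl : l < (n + #C : ℕ)) : ∃ (f : α → ℤ) (p : α → ℕ) (b : ℤ), C.image p = range #C ∧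
      ∑ w ∈ C, max (cliqueFire C n f x w - (n + p w)) 0 + staircase n b ≤
        staircase (n + #C) l ∧
      ∑ w ∈ C, max (-(cliqueFire C n f x w - (n + p w))) 0 + staircase n (n - 1 - b) ≤
        staircase (n + #C) ((n + #C : ℕ) - 1 - l) := by
  obtain ⟨σ, hpos, hneg⟩ := (isPeriodicWalk_cliqueWalk C n x).exists_window h₀ hl
  obtain ⟨f, p, hp, -, hheights⟩ := exists_cliqueFire_heights_eq C n x σ
  refine ⟨f, p, cliqueWalk C n x σ + n, hp, ?_, ?_⟩
  · rwa [staircase, ← sum_Ioc_add_natCast _ n (max · 0), hheights (max · 0)]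
  · rwa [staircase_reflect, ← sum_Ioc_add_natCast _ n fun v ↦ max (-v) 0,
      hheights fun v ↦ max (-v) 0]

lemma sum_cliqueFire_sub {p : α → ℕ} (hp : C.image p = range #C) :
    ∑ w ∈ C, (cliqueFire C n f x w - (n + p w)) =
      ∑ w ∈ C, x w - (n + 1) * ∑ w ∈ C, f w - ((n + #C).choose 2 - n.choose 2) := by
  rw [sum_sub_distrib, sum_eq_sum_range_of_image_eq hp fun i ↦ (n : ℤ) + i, choose_two_add,
    add_sub_cancel_left]
  simp only [cliqueFire, sum_add_distrib, sum_sub_distrib, ← mul_sum, sum_const, nsmul_eq_mul]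
  ring

end Clique

namespace Multigraph

variable {G : Multigraph V} {S C : Finset V} {ρ : V} {D : V → ℤ}

lemma AttachesClique.not_winnableOn_sub_piecewise (h : G.AttachesClique S ρ C) {p : V → ℕ}
    (hp : C.image p = range #C) {E f : V → ℤ}
    (hE : ¬ G.WinnableOn S (D + Pi.single ρ ((#S + 1) * ∑ w ∈ C, f w) - E)) :
    ¬ G.WinnableOn (S ∪ C)
      (D - S.piecewise E fun w ↦ max (cliqueFire C #S f D w - (#S + p w)) 0) := by
  set E' := S.piecewise E fun w ↦ max (cliqueFire C #S f D w - (#S + p w)) 0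
  rw [h.winnableOn_union_iff]
  rintro ⟨g, hg, hwin⟩
  have hE'S : ∀ w ∈ S, E' w = E w := fun w hw ↦ S.piecewise_eq_of_mem _ _ hw
  have hE'C : ∀ w ∈ C, E' w = max (cliqueFire C #S f D w - (#S + p w)) 0 := fun w hw ↦
    S.piecewise_eq_of_notMem _ _ (disjoint_right.1 h.disjoint hw)
  have hfire (w : V) : cliqueFire C #S g (D - E') w =
      cliqueFire C #S (g - f) (cliqueFire C #S f D - E') w := by
    have : cliqueFire C #S g D w = cliqueFire C #S (g - f) (cliqueFire C #S f D) w := by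
      rw [← cliqueFire_add, add_sub_cancel]
    simp only [cliqueFire, Pi.sub_apply] at this ⊢
    linarith
  have hsum : ∑ w ∈ C, (g - f) w ≤ 0 := by
    refine sum_nonpos_of_cliqueFire_nonneg hp (n := #S) (x := cliqueFire C #S f D - E')
      (fun w hw ↦ ?_) fun w hw ↦ hfire w ▸ hg w hw
    rw [Pi.sub_apply, hE'C w hw]
    linarith [le_max_left (cliqueFire C #S f D w - (#S + p w)) 0]
  simp only [Pi.sub_apply, sum_sub_distrib, sub_nonpos] at hsum
  refine hE (hwin.mono fun w hw ↦ ?_)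
  have : (#S + 1) * ∑ w ∈ C, g w ≤ (#S + 1 : ℤ) * ∑ w ∈ C, f w := by gcongr
  simp only [Pi.add_apply, Pi.sub_apply, hE'S w hw]
  linarith [Pi.single_mono (f := fun _ ↦ ℤ) ρ this w]

lemma QuasiBananaOn.exists_not_winnableOn (h : G.QuasiBananaOn S ρ) (l : ℤ) (D : V → ℤ) :
    ∃ E : V → ℤ, (∀ v, 0 ≤ E v) ∧ ∑ v ∈ S, E v ≤ max (staircase #S l)
        (staircase #S (#S - 1 - l) + ∑ v ∈ S, D v + 1 - (#S).choose 2) ∧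
      ¬ G.WinnableOn S (D - E) := by
  induction h generalizing l D with
  | base v =>
    refine ⟨fun _ ↦ max (D v + 1) 0, fun _ ↦ le_max_right _ _, ?_, ?_⟩
    · simp only [staircase, card_singleton, sum_singleton, range_one,
        Nat.choose_eq_zero_of_lt one_lt_two]
      lia
    · rintro ⟨f, hf⟩
      simpa using hf v (mem_singleton_self v)
  | @attach S C ρ _ _ hC _ ih =>
    obtain ⟨l', h₀, hl, hpos', hneg'⟩ := exists_clamp_staircase_le (n := #S + #C)
      (by have := card_pos.2 ⟨ρ, hC.root_mem⟩; lia) l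
    obtain ⟨f, p, b, hp, hpos, hneg⟩ := exists_cliqueFire_sum_max_le C (n := #S) D h₀ hl
    let γ (w : V) := cliqueFire C #S f D w - (#S + p w)
    obtain ⟨E, hE, hdeg, hwin⟩ := ih b (D + Pi.single ρ ((#S + 1) * ∑ w ∈ C, f w))
    refine ⟨S.piecewise E fun w ↦ max (γ w) 0, fun v ↦ ?_, ?_,
      hC.not_winnableOn_sub_piecewise hp hwin⟩
    · exact S.piecewise_cases (i := v) E _ (0 ≤ ·) (hE v) (le_max_right _ _)
    · have hsplit : ∑ w ∈ C, max (γ w) 0 - ∑ w ∈ C, max (-γ w) 0 = ∑ w ∈ C, γ w := by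
        rw [← sum_sub_distrib]
        exact sum_congr rfl fun w _ ↦ max_zero_sub_max_neg_zero_eq_self _
      have hγ : ∑ w ∈ C, γ w = _ := sum_cliqueFire_sub hp
      simp only [Pi.add_apply, sum_add_distrib, sum_pi_single', if_pos hC.root_mem] at hdeg
      rw [sum_piecewise, union_inter_cancel_left, union_sdiff_cancel_left hC.disjoint,
        card_union_of_disjoint hC.disjoint, sum_union hC.disjoint]
      lia

end Multigraph

lemma exists_cliqueFire_nonneg_le {α : Type*} (C : Finset α) (n : ℕ) (x : α → ℤ) :
    ∃ (f : α → ℤ) (p : α → ℕ), C.image p = range #C ∧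
      ∀ w ∈ C, 0 ≤ cliqueFire C n f x w ∧ cliqueFire C n f x w ≤ n + p w := by
  have hwalk := isPeriodicWalk_cliqueWalk C n x
  obtain ⟨σ, hle, hpos⟩ := hwalk.exists_window_nonpos
  obtain ⟨f, p, hp, hge, hheights⟩ := exists_cliqueFire_heights_eq C n x σ
  refine ⟨f, p, hp, fun w hw ↦ ⟨?_, ?_⟩⟩
  · have := hwalk.period σ
    push_cast at this hpos
    linarith [hge w hw]
  · have hzero : ∑ s ∈ Ioc σ (σ + (n + #C : ℕ)), max (cliqueWalk C n x s) 0 = 0 :=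
      sum_eq_zero fun s hs ↦ max_eq_right (hle s (mem_Ioc.1 hs).2)
    have hblock : 0 ≤ ∑ v ∈ Ioc (cliqueWalk C n x σ) (cliqueWalk C n x σ + n), max v 0 :=
      sum_nonneg fun _ _ ↦ le_max_right _ _
    have hw' := single_le_sum (f := fun w ↦ max (cliqueFire C n f x w - (n + p w)) 0)
      (fun _ _ ↦ le_max_right _ _) hw
    linarith [hheights (max · 0), le_max_left (cliqueFire C n f x w - (n + p w)) 0]

namespace Multigraph

variable {G : Multigraph V} {S C : Finset V} {ρ : V}

lemma QuasiBananaOn.winnableOn_single_sub (h : G.QuasiBananaOn S ρ) {l : ℤ} {E : V → ℤ}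
    (hE : ∀ v ∈ S, 0 ≤ E v) (hdeg : ∑ v ∈ S, E v < staircase (#S + 1) (l + 1)) :
    G.WinnableOn S (Pi.single ρ (l * (#S + 1)) - E) := by
  induction h generalizing l with
  | base v =>
    have := hE v (mem_singleton_self v)
    refine ⟨0, fun w hw ↦ ?_⟩
    obtain rfl := mem_singleton.1 hw
    simp only [staircase, card_singleton, sum_singleton, sum_range_succ, sum_range_zero,
      Pi.sub_apply, Pi.single_eq_same, sub_self, mul_zero] at hdeg ⊢
    push_cast at hdeg ⊢
    lia
  | @attach S C ρ ρ' _ hC hρ' ih =>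
    rw [card_union_of_disjoint hC.disjoint] at hdeg ⊢
    rw [sum_union hC.disjoint] at hdeg
    obtain ⟨f, p, hp, hf⟩ := exists_cliqueFire_nonneg_le C #S fun w ↦ l - E w
    have hfire : ∀ w, cliqueFire C #S (Pi.single ρ' l)
        (Pi.single ρ' (l * ((#S + #C : ℕ) + 1)) - E) w = l - E w := fun w ↦ by
      rw [cliqueFire_single hρ', Pi.sub_apply, Nat.cast_add]
      ring
    have hdegS : ∑ v ∈ S, E v < staircase (#S + 1) (l + ∑ w ∈ C, f w + 1) := by
      have hstair := staircase_add_card_le hp (#S + 1) (l + ∑ w ∈ C, f w + 1) f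
      rw [show l + ∑ w ∈ C, f w + 1 - ∑ w ∈ C, f w = l + 1 by ring, add_right_comm] at hstair
      have : ∀ w ∈ C, max (l + ∑ w ∈ C, f w + 1 - ((#S + 1 : ℕ) + p w) -
          ((#S + 1 : ℕ) + #C) * f w) 0 ≤ E w := fun w hw ↦ by
        refine max_le ?_ (hE w (mem_union_right _ hw))
        have := (hf w hw).2
        simp only [cliqueFire] at this
        push_cast
        linarith
      linarith [sum_le_sum this]
    refine hC.winnableOn_union_iff.2 ⟨Pi.single ρ' l + f, fun w hw ↦ ?_, ?_⟩
    · rw [cliqueFire_add, funext hfire]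
      exact (hf w hw).1
    · refine (ih (fun v hv ↦ hE v (mem_union_left _ hv)) hdegS).mono fun v hv ↦ ?_
      have hne : v ≠ ρ' := fun hv' ↦ disjoint_left.1 hC.disjoint hv (hv' ▸ hρ')
      have hsum : ∑ w ∈ C, (Pi.single ρ' l + f : V → ℤ) w = l + ∑ w ∈ C, f w := by
        simp only [Pi.add_apply, sum_add_distrib, sum_pi_single', if_pos hρ']
      rw [hsum, mul_comm (#S + 1 : ℤ)]
      simp only [Pi.add_apply, Pi.sub_apply, Pi.single_eq_of_ne hne]
      linarith

end Multigraph

/-! ### Genus and levels of a quasi-banana graph -/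

namespace Multigraph

variable {G : Multigraph V} {S C : Finset V} {ρ : V}

namespace AttachesClique

lemma sum_mult_left (h : G.AttachesClique S ρ C) {w : V} (hw : w ∈ C) :
    ∑ u ∈ S, G.mult w u = #S + 1 := by
  rw [sum_eq_single_of_mem ρ h.root_mem (h.mult_off_root w hw), h.mult_root w hw]

lemma sum_mult_self_add_one (h : G.AttachesClique S ρ C) {w : V} (hw : w ∈ C) :
    ∑ u ∈ C, G.mult w u + 1 = #C := by
  rw [← add_sum_erase C _ hw, G.loopless, zero_add, sum_congr rfl fun u hu ↦
    h.mult_clique w hw u (mem_of_mem_erase hu) (ne_of_mem_erase hu).symm, ← card_eq_sum_ones,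
    card_erase_add_one hw]

end AttachesClique

lemma QuasiBananaOn.sum_sum_mult (h : G.QuasiBananaOn S ρ) :
    (∑ u ∈ S, ∑ v ∈ S, G.mult u v : ℤ) = 2 * ((#S).choose 2 + #S - 1) := by
  induction h with
  | base v => simp [G.loopless]
  | @attach S C ρ _ _ hC _ ih =>
    have hCS : ∑ u ∈ C, ∑ v ∈ S, (G.mult u v : ℤ) = #C * (#S + 1) := by
      rw [← nsmul_eq_mul, ← sum_const]
      exact sum_congr rfl fun w hw ↦ mod_cast hC.sum_mult_left hw
    have hSC : ∑ u ∈ S, ∑ v ∈ C, (G.mult u v : ℤ) = #C * (#S + 1) := by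
      rw [sum_comm, ← hCS]
      simp only [G.symm]
    have hCC : ∑ u ∈ C, ∑ v ∈ C, (G.mult u v : ℤ) = #C * (#C - 1) := by
      rw [← nsmul_eq_mul, ← sum_const]
      exact sum_congr rfl fun w hw ↦ eq_sub_of_add_eq (mod_cast hC.sum_mult_self_add_one hw)
    have hchoose := two_mul_choose_two (#S)
    have hchoose' := two_mul_choose_two (#S + #C)
    simp only [sum_union hC.disjoint, sum_add_distrib, card_union_of_disjoint hC.disjoint, ih, hSC,
      hCS, hCC]
    push_cast at hchoose' ⊢
    linarith

lemma QuasiBananaOn.genus_eq (h : G.QuasiBananaOn univ ρ) :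
    G.genus = (Fintype.card V).choose 2 := by
  have := h.sum_sum_mult
  rw [card_univ] at this
  rw [genus]
  push_cast
  lia

end Multigraph

lemma filter_le_add_one {α : Type*} [DecidableEq α] (s : Finset α) (φ : α → ℕ) (i : ℕ) :
    s.filter (φ · ≤ i + 1) = s.filter (φ · ≤ i) ∪ s.filter (φ · = i + 1) := by
  rw [← filter_or]
  exact filter_congr fun _ _ ↦ by lia

lemma disjoint_filter_le_filter_eq_add_one {α : Type*} (s : Finset α) (φ : α → ℕ) (i : ℕ) :
    Disjoint (s.filter (φ · ≤ i)) (s.filter (φ · = i + 1)) :=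
  disjoint_filter.2 fun _ _ ↦ by lia

namespace Multigraph.IsQBLabelling

variable {G : Multigraph V} {m : ℕ} {q : ℕ → ℕ} {ℓ : V → ℕ × ℕ} {i : ℕ}

lemma card_level (h : G.IsQBLabelling m q ℓ) (hi : i ≤ m) :
    #{v | (ℓ v).1 = i} = qbSize q i := by
  obtain ⟨-, hinj, hmem, hsurj, -⟩ := h
  have himage : ({v | (ℓ v).1 = i} : Finset V).image (fun v ↦ (ℓ v).2) = Icc 1 (qbSize q i) := by
    ext j
    simp only [mem_image, mem_filter, mem_univ, true_and, mem_Icc]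
    refine ⟨?_, fun hj ↦ ?_⟩
    · rintro ⟨v, rfl, rfl⟩
      exact (hmem v).2
    · obtain ⟨v, hv⟩ := hsurj i j hi hj.1 hj.2
      exact ⟨v, by simp only [hv, and_self]⟩
  rw [← Nat.add_sub_cancel (qbSize q i) 1, ← Nat.card_Icc, ← himage, card_image_of_injOn]
  intro u hu v hv huv
  simp only [coe_filter, mem_univ, true_and, Set.mem_ofPred_eq] at hu hv
  exact hinj (Prod.ext (hu.trans hv.symm) huv)

lemma card_filter_le (h : G.IsQBLabelling m q ℓ) (hi : i ≤ m) :
    #{v | (ℓ v).1 ≤ i} = ∑ j ∈ Icc 1 i, q j + 1 := by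
  induction i with
  | zero => simpa [qbSize] using h.card_level hi
  | succ i ih =>
    rw [filter_le_add_one,
      card_union_of_disjoint (disjoint_filter_le_filter_eq_add_one _ _ _),
      ih (by lia), h.card_level hi, sum_Icc_succ_top (by lia), qbSize, if_neg i.succ_ne_zero]
    ring

lemma attachesClique (h : G.IsQBLabelling m q ℓ) (hi : i ≤ m) {ρ : V} (hρ : ℓ ρ = (i, 1)) :
    G.AttachesClique {v | (ℓ v).1 ≤ i} ρ {v | (ℓ v).1 = i + 1} where
  root_mem := by simp [hρ]
  disjoint := disjoint_filter_le_filter_eq_add_one _ _ _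
  mult_clique v hv w hw hne := by
    obtain ⟨-, -, -, -, hmult⟩ := h
    rw [mem_filter_univ] at hv hw
    rw [hmult v w hne, if_pos (hv.trans hw.symm)]
  mult_root w hw := by
    have hcard := h.card_filter_le hi
    obtain ⟨-, -, -, -, hmult⟩ := h
    rw [mem_filter_univ] at hw
    rw [hmult w ρ (by rintro rfl; simp [hρ] at hw), hcard, hw, hρ, if_neg i.succ_ne_self,
      if_neg (by lia), if_pos ⟨rfl, rfl⟩]
  mult_off_root w hw u hu hne := by
    obtain ⟨-, hinj, -, -, hmult⟩ := h
    rw [mem_filter_univ] at hw hu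
    have hroot : ¬ ((ℓ u).1 = i ∧ (ℓ u).2 = 1) := fun hu' ↦
      hne (hinj ((Prod.ext hu'.1 hu'.2).trans hρ.symm))
    rw [hmult w u (by rintro rfl; lia), if_neg (by lia), if_neg (by lia), if_neg (by lia)]

lemma exists_eq_root (h : G.IsQBLabelling m q ℓ) (hi : i ≤ m) : ∃ ρ, ℓ ρ = (i, 1) := by
  obtain ⟨hq, -, -, hsurj, -⟩ := h
  refine hsurj i 1 hi le_rfl ?_
  rw [qbSize]
  split_ifs with hi₀
  exacts [le_rfl, hq i (Nat.one_le_iff_ne_zero.2 hi₀) hi]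

lemma quasiBananaOn (h : G.IsQBLabelling m q ℓ) (hi : i ≤ m) {ρ : V} (hρ : ℓ ρ = (i, 1)) :
    G.QuasiBananaOn {v | (ℓ v).1 ≤ i} ρ := by
  induction i generalizing ρ with
  | zero =>
    obtain ⟨v, hv⟩ := card_eq_one.1 (h.card_filter_le hi)
    obtain rfl : ρ = v := mem_singleton.1 (hv ▸ by simp [hρ])
    exact hv ▸ .base ρ
  | succ i ih =>
    obtain ⟨ρ₀, hρ₀⟩ := h.exists_eq_root (i := i) (by lia)
    rw [filter_le_add_one]
    exact .attach (ih (by lia) hρ₀) (h.attachesClique (by lia) hρ₀) (by simp [hρ])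

end Multigraph.IsQBLabelling

lemma Multigraph.IsQuasiBanana.exists_quasiBananaOn_univ {G : Multigraph V}
    (h : G.IsQuasiBanana) : ∃ ρ, G.QuasiBananaOn univ ρ := by
  obtain ⟨m, q, ℓ, hℓ⟩ := h
  obtain ⟨ρ, hρ⟩ := hℓ.exists_eq_root le_rfl
  have hunion := hℓ.quasiBananaOn le_rfl hρ
  rw [filter_true_of_mem fun v _ ↦ (hℓ.2.2.1 v).1] at hunion
  exact ⟨ρ, hunion⟩

/-! ### Rank and gonality -/

namespace Multigraph

variable {G : Multigraph V} {ρ : V} {D E : V → ℤ} {r l : ℤ}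

lemma degree_single (v : V) (a : ℤ) : degree (Pi.single v a) = a := by
  rw [degree, sum_pi_single', if_pos (mem_univ v)]

lemma degree_add {α : Type*} [Fintype α] (D E : α → ℤ) : degree (D + E) = degree D + degree E :=
  sum_add_distrib

lemma lt_degree_of_forall_winnable (hE : Effective E) (hDE : ¬ G.Winnable (D - E))
    (hr : ∀ E' : V → ℤ, Effective E' → degree E' = r → G.Winnable (D - E')) : r < degree E := by
  by_contra! hle
  have hne : Nonempty V := by
    by_contra! hempty
    exact hDE ⟨_, hempty.elim, 0, rfl⟩
  obtain ⟨v⟩ := hne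
  let E' := E + Pi.single v (r - degree E)
  have hEE' : E ≤ E' := le_add_of_nonneg_right (Pi.single_nonneg.2 (sub_nonneg.2 hle))
  have hdeg : degree E' = r := by
    rw [degree_add, degree_single, add_sub_cancel]
  have hwin := hr E' (fun w ↦ (hE w).trans (hEE' w)) hdeg
  rw [winnable_iff_winnableOn] at hwin hDE
  exact hDE (hwin.mono fun w _ ↦ sub_le_sub_left (hEE' w) _)

lemma rank_lt_degree (hE : Effective E) (hDE : ¬ G.Winnable (D - E)) : G.rank D < degree E := by
  refine lt_degree_of_forall_winnable hE hDE (Int.csSup_mem ⟨-1, fun E' hE' hdeg ↦ ?_⟩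
    ⟨degree E, fun _ hr ↦ (lt_degree_of_forall_winnable hE hDE hr).le⟩)
  have : 0 ≤ degree E' := sum_nonneg fun v _ ↦ hE' v
  lia

lemma rank_eq_of_degree_le (hE : Effective E) (hDE : ¬ G.Winnable (D - E))
    (hdeg : degree E ≤ r + 1)
    (hr : ∀ E' : V → ℤ, Effective E' → degree E' = r → G.Winnable (D - E')) : G.rank D = r :=
  le_antisymm (Int.le_of_lt_add_one ((rank_lt_degree hE hDE).trans_le hdeg))
    (le_csSup ⟨degree E, fun _ hr ↦ (lt_degree_of_forall_winnable hE hDE hr).le⟩ hr)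

lemma QuasiBananaOn.gonality_eq_of_staircase (h : G.QuasiBananaOn univ ρ) {L c : ℤ} (hc : 0 ≤ c)
    (hlow : r + c < staircase (Fintype.card V + 1) (L + 1))
    (hup : staircase (Fintype.card V) l ≤ r)
    (hup' : staircase (Fintype.card V) (Fintype.card V - 1 - l) +
      (L * (Fintype.card V + 1) - c) - (Fintype.card V).choose 2 ≤ r) :
    G.gonality r = L * (Fintype.card V + 1) - c := by
  have hbound (D : V → ℤ) : ∃ E, Effective E ∧ ¬ G.Winnable (D - E) ∧
      degree E ≤ max r (r + 1 + degree D - (L * (Fintype.card V + 1) - c)) := by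
    obtain ⟨E, hE, hdeg, hDE⟩ := h.exists_not_winnableOn l D
    rw [card_univ, ← degree, ← degree] at hdeg
    exact ⟨E, hE, winnable_iff_winnableOn.not.2 hDE, hdeg.trans (max_le_max hup (by linarith))⟩
  refine IsLeast.csInf_eq ⟨⟨_, ?_, degree_single ρ _⟩, ?_⟩
  · obtain ⟨E, hE, hDE, hdeg⟩ := hbound (Pi.single ρ (L * (Fintype.card V + 1) - c))
    rw [degree_single] at hdeg
    refine rank_eq_of_degree_le hE hDE (by lia) fun E' hE' hdeg' ↦ ?_
    have hsum : degree (E' + Pi.single ρ c) = r + c := by rw [degree_add, degree_single, hdeg']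
    have hnonneg : 0 ≤ E' + Pi.single ρ c := add_nonneg hE' (Pi.single_nonneg.2 hc)
    have hwin := h.winnableOn_single_sub (l := L) (fun v _ ↦ hnonneg v)
      (by rwa [← degree, hsum, card_univ])
    rw [card_univ, add_comm E'] at hwin
    rwa [winnable_iff_winnableOn, Pi.single_sub, sub_sub]
  · rintro _ ⟨D, hD, rfl⟩
    obtain ⟨E, hE, hDE, hdeg⟩ := hbound D
    have := rank_lt_degree hE hDE
    lia

end Multigraph

namespace Multigraph.IsQuasiBanana

variable {G : Multigraph V} {r l : ℤ}

lemma genus_eq (h : G.IsQuasiBanana) : G.genus = (Fintype.card V).choose 2 :=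
  let ⟨_, hρ⟩ := h.exists_quasiBananaOn_univ
  hρ.genus_eq

lemma gonality_eq (hG : G.IsQuasiBanana) {h : ℤ} (hl₀ : 0 ≤ l) (hl : l ≤ Fintype.card V)
    (hh₀ : 0 ≤ h) (hh : h ≤ l) (hr : 2 * r = l * (l + 3) - 2 * h) :
    G.gonality r = l * (Fintype.card V + 1) - h := by
  obtain ⟨ρ, hρ⟩ := hG.exists_quasiBananaOn_univ
  have hstair := two_mul_staircase hl₀ hl
  have hstair' := two_mul_staircase (n := Fintype.card V + 1) (l := l + 1) (by lia)
    (by push_cast; lia)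
  have hreflect := staircase_sub_reflect (Fintype.card V) l
  exact hρ.gonality_eq_of_staircase (l := l) hh₀ (by linarith) (by linarith) (by linarith)

lemma gonality_one (h : G.IsQuasiBanana) : G.gonality 1 = Fintype.card V := by
  obtain ⟨ρ, -⟩ := h.exists_quasiBananaOn_univ
  have : 0 < Fintype.card V := Fintype.card_pos_iff.2 ⟨ρ⟩
  simpa using h.gonality_eq (l := 1) (h := 1) (r := 1) one_pos.le (by lia) one_pos.le le_rfl rfl

lemma gonality_eq_genus_add (h : G.IsQuasiBanana) (hr : G.genus ≤ r) :
    G.gonality r = G.genus + r := by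
  obtain ⟨ρ, hρ⟩ := h.exists_quasiBananaOn_univ
  rw [h.genus_eq] at hr ⊢
  set n := Fintype.card V
  set g := ((n.choose 2 : ℕ) : ℤ)
  have hchoose : ((n + 1).choose 2 : ℤ) = g + n := by simp [choose_two_add n 1, g]
  have hdouble : 2 * g = n * (n - 1) := two_mul_choose_two n
  have hzero : staircase n (n - 1 - (n - 1)) = 0 := staircase_eq_zero (sub_self _).le
  have hstair := staircase_sub_reflect n (n - 1)
  have hstair' := staircase_sub_reflect (n + 1) (r + g + n + 1)
  have hnonneg := staircase_nonneg (n + 1) (((n + 1 : ℕ) : ℤ) - 1 - (r + g + n + 1))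
  rw [hchoose, Nat.cast_succ] at hstair'
  rw [Nat.cast_succ] at hnonneg
  have hc : 0 ≤ (r + g + n) * (n + 1) - (r + g) := by
    nlinarith [Nat.cast_nonneg (α := ℤ) (n.choose 2)]
  have hgon := hρ.gonality_eq_of_staircase (r := r) (l := n - 1) (L := r + g + n) hc
    (by linarith) (by linarith) (by linarith)
  linarith

end Multigraph.IsQuasiBanana

/-- The gonality sequence of a quasi-banana graph with first gonality `k`
and genus `g = C(k,2)`: for `1 ≤ r < g`, `gon_r(G) = l(k+1) - h` where `1 ≤ l ≤ k-2` and
`0 ≤ h ≤ l` are determined by `r = l(l+3)/2 - h`; for `r ≥ g`, `gon_r(G) = g + r`. -/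
theorem stmt2 (G : Multigraph V) (hG : G.Connected) (hQB : G.IsQuasiBanana)
    (k : ℕ) (hk : G.gonality 1 = (k : ℤ)) (hg : G.genus = (Nat.choose k 2 : ℤ))
    (r : ℤ) (hr : 1 ≤ r) :
    (r < G.genus →
      ∀ l h : ℤ, 1 ≤ l → l ≤ (k : ℤ) - 2 → 0 ≤ h → h ≤ l →
        2 * r = l * (l + 3) - 2 * h →
        G.gonality r = l * ((k : ℤ) + 1) - h) ∧
    (G.genus ≤ r → G.gonality r = G.genus + r) := by
  have hcard : (Fintype.card V : ℤ) = k := hQB.gonality_one.symm.trans hk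
  refine ⟨fun _ l h hl hlk hh₀ hh hrl ↦ ?_, hQB.gonality_eq_genus_add⟩
  rw [← hcard] at hlk ⊢
  exact hQB.gonality_eq (by lia) (by lia) hh₀ hh hrl
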